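/- Fractional Korn's inequality on the whole space: Let d ≥ 1 be an integer, s ∈ (0,1) and 1 < p < ∞. For every vector field f ∈ L^p(ℝ^d; ℝ^d) one has [f]_{𝒳^s_p(ℝ^d)} ≤ [f]_{W^{s,p}(ℝ^d)}, and there exists a constant C = C(d,p,s) > 0 such that [f]_{W^{s,p}(ℝ^d)} ≤ C · [f]_{𝒳^s_p(ℝ^d)}. In particular, a vector field f ∈ L^p(ℝ^d; ℝ^d) has finite Gagliardo seminorm [f]_{W^{s,p}(ℝ^d)} if and only if it has finite projected seminorm [f]_{𝒳^s_p(ℝ^d)}. -/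

import Mathlib

open MeasureTheory Filter Set
open scoped ENNReal NNReal Topology

noncomputable section

abbrev Ed (d : ℕ) : Type := EuclideanSpace ℝ (Fin d)

/-- The `p`-th power of the projected Gagliardo seminorm `[f]_{𝒳^s_p(Ω)}^p`. -/
def projGagP (d : ℕ) (s p : ℝ) (Ω : Set (Ed d)) (f : Ed d → Ed d) : ℝ≥0∞ :=
  ∫⁻ x in Ω, ∫⁻ y in Ω,
    ENNReal.ofReal ((|(inner ℝ (f y - f x) (y - x) : ℝ)| / ‖y - x‖) ^ p /
      ‖y - x‖ ^ ((d : ℝ) + s * p))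

/-- The projected Gagliardo seminorm `[f]_{𝒳^s_p(Ω)}`. -/
def projSem (d : ℕ) (s p : ℝ) (Ω : Set (Ed d)) (f : Ed d → Ed d) : ℝ≥0∞ :=
  projGagP d s p Ω f ^ (1 / p)

/-- The `p`-th power of the Gagliardo seminorm `[f]_{W^{s,p}(Ω)}^p`. -/
def gagP (d : ℕ) (s p : ℝ) (Ω : Set (Ed d)) (f : Ed d → Ed d) : ℝ≥0∞ :=
  ∫⁻ x in Ω, ∫⁻ y in Ω,
    ENNReal.ofReal (‖f y - f x‖ ^ p / ‖y - x‖ ^ ((d : ℝ) + s * p))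

/-- The Gagliardo seminorm `[f]_{W^{s,p}(Ω)}`. -/
def gagSem (d : ℕ) (s p : ℝ) (Ω : Set (Ed d)) (f : Ed d → Ed d) : ℝ≥0∞ :=
  gagP d s p Ω f ^ (1 / p)

/-!
In the variables `z = (h, x)`, a displacement and a base point, both seminorms are `Lᵖ` norms for
the measure `‖h‖⁻ᵠ dh dx` with `q = d + s p`: of `Δ_h f (x)` for the Gagliardo seminorm, and of its
component along `h` for the projected one.

Second differences are controlled by projected first differences. For a linear map `A`, the pairing
of `Δ_h Δ_h f (x)` with `A h` is a linear combination of five increments of `f`, each along an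
injective linear image `B h` of `h`, from a base point `x + t h`, and paired with its own
displacement `B h`. The change of variables `(h, x) ↦ (B h, x + t h)` bounds each of them by the
projected seminorm, and letting `A` run over the matrix units recovers the whole vector `Δ_h Δ_h f`.

First differences are controlled by second ones: `2 Δ_h f = Δ_{2h} f - Δ_h Δ_h f`, and scaling gives
`‖Δ_{2h} f‖ = 2ˢ ‖Δ_h f‖`, so that `‖Δ_h f‖ ≤ 2^{s-1} ‖Δ_h f‖ + ‖Δ_h Δ_h f‖ / 2` with `s < 1`. To
absorb the first term on the right one needs it to be finite: restrict to `‖h‖ > ε`, where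
`f ∈ Lᵖ` makes it so, and let `ε → 0`. The restriction is harmless, as `h ↦ 2 h` preserves it.
-/

open Module (finrank)
open scoped fwdDiff RealInnerProductSpace

section ProductMeasure

variable {α β G F : Type*} [MeasurableSpace α] [MeasurableSpace β]
  [AddCommGroup G] [MeasurableSpace G] [MeasurableAdd₂ G] [NormedAddCommGroup F]
  {η : Measure α} [SFinite η] {μ : Measure G} [SFinite μ] [μ.IsAddRightInvariant]

theorem measurePreserving_prodMk_add {B : α → β} (hB : Measurable B) {S : α → G}
    (hS : Measurable S) :
    MeasurePreserving (fun z : α × G => (B z.1, z.2 + S z.1)) (η.prod μ) ((η.map B).prod μ) :=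
  (hB.measurePreserving η).skew_product
    (measurable_snd.add (hS.comp measurable_fst))
    (ae_of_all _ fun h => map_add_right_eq_self μ (S h))

theorem measurePreserving_shear {S : α → G} (hS : Measurable S) :
    MeasurePreserving (fun z : α × G => (z.1, z.2 + S z.1)) (η.prod μ) (η.prod μ) := by
  simpa using measurePreserving_prodMk_add (η := η) (μ := μ) measurable_id hS

theorem aestronglyMeasurable_comp_snd_add {f : G → F} (hf : AEStronglyMeasurable f μ)
    {S : α → G} (hS : Measurable S) :
    AEStronglyMeasurable (fun z : α × G => f (z.2 + S z.1)) (η.prod μ) :=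
  hf.comp_snd.comp_quasiMeasurePreserving (measurePreserving_shear hS).quasiMeasurePreserving

theorem aestronglyMeasurable_fwdDiff {f : G → F} (hf : AEStronglyMeasurable f μ)
    {B S : α → G} (hB : Measurable B) (hS : Measurable S) :
    AEStronglyMeasurable (fun z : α × G => Δ_[B z.1] f (z.2 + S z.1)) (η.prod μ) := by
  simpa only [fwdDiff, add_assoc, Pi.sub_def, Pi.add_apply] using
    (aestronglyMeasurable_comp_snd_add hf (hS.add hB)).sub (aestronglyMeasurable_comp_snd_add hf hS)

theorem aestronglyMeasurable_fwdDiff_fwdDiff {η : Measure G} [SFinite η] {f : G → F}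
    (hf : AEStronglyMeasurable f μ) :
    AEStronglyMeasurable (fun z : G × G => Δ_[z.1] (Δ_[z.1] f) z.2) (η.prod μ) := by
  simpa only [fwdDiff, id, add_zero, Pi.sub_def] using
    (aestronglyMeasurable_fwdDiff hf measurable_id measurable_id).sub
      (aestronglyMeasurable_fwdDiff hf measurable_id (measurable_const (a := (0 : G))))

theorem eLpNorm_comp_prodMk_add_le {η' : Measure β} [SFinite η'] {c p : ℝ≥0∞} (hp : p ≠ ∞)
    {B : α → β} (hB : Measurable B) {S : α → G} (hS : Measurable S) (hBc : η.map B ≤ c • η')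
    {u : β × G → F} (hu : AEStronglyMeasurable u (η'.prod μ)) :
    eLpNorm (fun z : α × G => u (B z.1, z.2 + S z.1)) p (η.prod μ) ≤
      c ^ (1 / p).toReal * eLpNorm u p (η'.prod μ) := by
  have hle : (η.map B).prod μ ≤ c • η'.prod μ := by
    rw [← Measure.prod_smul_left]
    exact Measure.prod_mono hBc le_rfl
  have hu' : AEStronglyMeasurable u ((η.map B).prod μ) :=
    hu.mono_ac (hle.absolutelyContinuous.trans Measure.smul_absolutelyContinuous)
  calc eLpNorm (fun z : α × G => u (B z.1, z.2 + S z.1)) p (η.prod μ)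
      = eLpNorm u p ((η.map B).prod μ) :=
        eLpNorm_comp_measurePreserving hu' (measurePreserving_prodMk_add hB hS)
    _ ≤ eLpNorm u p (c • η'.prod μ) := eLpNorm_mono_measure u hle
    _ = c ^ (1 / p).toReal * eLpNorm u p (η'.prod μ) := by
        rw [eLpNorm_smul_measure_of_ne_top hp, smul_eq_mul]

theorem memLp_fwdDiff [IsFiniteMeasure η] {p : ℝ≥0∞} {f : G → F} (hf : MemLp f p μ)
    {B : α → G} (hB : Measurable B) :
    MemLp (fun z : α × G => Δ_[B z.1] f z.2) p (η.prod μ) :=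
  ((hf.comp_snd η).comp_measurePreserving (measurePreserving_shear hB)).sub (hf.comp_snd η)

end ProductMeasure

theorem eLpNorm_le_of_forall_eLpNorm_restrict_le {α F : Type*} [MeasurableSpace α]
    [NormedAddCommGroup F] {ν : Measure α} {p K : ℝ≥0∞} (hp : p ≠ ∞) {u : α → F}
    {A : ℕ → Set α} (hA : Monotone A) (hν : ∀ᵐ z ∂ν, z ∈ ⋃ n, A n)
    (hK : ∀ n, eLpNorm u p (ν.restrict (A n)) ≤ K) : eLpNorm u p ν ≤ K := by
  rcases eq_or_ne p 0 with rfl | hp0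
  · simp
  have hp_pos : 0 < p.toReal := ENNReal.toReal_pos hp0 hp
  simp only [eLpNorm_eq_lintegral_rpow_enorm_toReal hp0 hp, one_div,
    ENNReal.rpow_inv_le_iff hp_pos] at hK ⊢
  rw [← Measure.restrict_eq_self_of_ae_mem hν, setLIntegral_iUnion_of_directed _ hA.directed_le]
  exact iSup_le hK

theorem rpow_neg_le_mul_rpow_neg {C t u q : ℝ} (hq : 0 ≤ q) (ht : 0 < t) (hu : 0 < u)
    (h : u ≤ C * t) : t ^ (-q) ≤ C ^ q * u ^ (-q) := by
  have hC : 0 < C := pos_of_mul_pos_left (hu.trans_le h) ht.le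
  calc t ^ (-q) = C ^ q * (C * t) ^ (-q) := by
        rw [Real.mul_rpow hC.le ht.le, ← mul_assoc, ← Real.rpow_add hC, add_neg_cancel,
          Real.rpow_zero, one_mul]
    _ ≤ C ^ q * u ^ (-q) :=
        mul_le_mul_of_nonneg_left (Real.rpow_le_rpow_of_nonpos hu h (neg_nonpos.2 hq))
          (by positivity)

section RpowNormMeasure

variable {E : Type*} [NormedAddCommGroup E] [MeasurableSpace E]

/-- The measure `‖h‖⁻ᵠ dh` on displacements `h`. Writing `(h, x)` for a displacement and a base
point, the Gagliardo-type seminorms are `Lᵖ` norms over `(rpowNormMeasure μ q).prod μ` of difference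
quotients in the variables `(h, x)`. -/
def rpowNormMeasure (μ : Measure E) (q : ℝ) : Measure E :=
  μ.withDensity fun h => ENNReal.ofReal (‖h‖ ^ (-q))

variable {μ : Measure E} {q : ℝ}

instance [SFinite μ] : SFinite (rpowNormMeasure μ q) := by
  unfold rpowNormMeasure
  infer_instance

variable [BorelSpace E]

theorem lintegral_rpowNormMeasure (u : E → ℝ≥0∞) :
    ∫⁻ h, u h ∂rpowNormMeasure μ q = ∫⁻ h, ENNReal.ofReal (‖h‖ ^ (-q)) * u h ∂μ :=
  lintegral_withDensity_eq_lintegral_mul_non_measurable μ (by fun_prop) (by simp) u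

theorem ae_rpowNormMeasure_ne_zero (hq : q ≠ 0) : ∀ᵐ h ∂rpowNormMeasure μ q, h ≠ 0 := by
  rw [rpowNormMeasure, ae_withDensity_iff (by fun_prop)]
  refine ae_of_all _ fun h hh h0 => hh ?_
  simp [h0, Real.zero_rpow (neg_ne_zero.2 hq)]

variable [NormedSpace ℝ E] [FiniteDimensional ℝ E] [μ.IsAddHaarMeasure]

theorem map_rpowNormMeasure_le (hq : 0 < q) {B : E →L[ℝ] E} (hB : Function.Injective B) {C : ℝ}
    (hC : ∀ h, ‖B h‖ ≤ C * ‖h‖) :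
    (rpowNormMeasure μ q).map B ≤
      (ENNReal.ofReal (C ^ q) * ENNReal.ofReal |(LinearMap.det (B : E →ₗ[ℝ] E))⁻¹|) •
        rpowNormMeasure μ q := by
  have hdet : LinearMap.det (B : E →ₗ[ℝ] E) ≠ 0 := fun h0 =>
    (LinearMap.bot_lt_ker_of_det_eq_zero h0).ne' (LinearMap.ker_eq_bot.2 hB)
  have hB_meas : Measurable B := B.continuous.measurable
  have hkernel (h : E) :
      ENNReal.ofReal (‖h‖ ^ (-q)) ≤ ENNReal.ofReal (C ^ q) * ENNReal.ofReal (‖B h‖ ^ (-q)) := by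
    rcases eq_or_ne h 0 with rfl | hh
    · simp [Real.zero_rpow (neg_ne_zero.2 hq.ne')]
    rw [← ENNReal.ofReal_mul' (by positivity)]
    exact ENNReal.ofReal_le_ofReal <| rpow_neg_le_mul_rpow_neg hq.le (norm_pos_iff.2 hh)
      (norm_pos_iff.2 ((map_ne_zero_iff B hB).2 hh)) (hC h)
  refine Measure.le_iff.2 fun A hA => ?_
  calc (rpowNormMeasure μ q).map B A
      = ∫⁻ h in B ⁻¹' A, ENNReal.ofReal (‖h‖ ^ (-q)) ∂μ := by
        rw [Measure.map_apply hB_meas hA, rpowNormMeasure, withDensity_apply _ (hB_meas hA)]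
    _ ≤ ∫⁻ h in B ⁻¹' A, ENNReal.ofReal (C ^ q) * ENNReal.ofReal (‖B h‖ ^ (-q)) ∂μ :=
        lintegral_mono hkernel
    _ = ENNReal.ofReal (C ^ q) * ∫⁻ h in A, ENNReal.ofReal (‖h‖ ^ (-q)) ∂μ.map B := by
        rw [lintegral_const_mul _ (by fun_prop), setLIntegral_map hA (by fun_prop) hB_meas]
    _ = _ := by
        have hmap := Measure.map_linearMap_addHaar_eq_smul_addHaar μ hdet
        rw [ContinuousLinearMap.coe_coe] at hmap
        rw [hmap, Measure.restrict_smul, lintegral_smul_measure, Measure.smul_apply, smul_eq_mul,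
          smul_eq_mul, mul_assoc, rpowNormMeasure, withDensity_apply _ hA]

theorem map_rpowNormMeasure_restrict_le (hq : 0 < q) {B : E →L[ℝ] E} (hB : Function.Injective B)
    {C : ℝ} (hC : ∀ h, ‖B h‖ ≤ C * ‖h‖) {A : Set E} (hA : MeasurableSet A)
    (hBA : Set.MapsTo B A A) :
    ((rpowNormMeasure μ q).restrict A).map B ≤
      (ENNReal.ofReal (C ^ q) * ENNReal.ofReal |(LinearMap.det (B : E →ₗ[ℝ] E))⁻¹|) •
        (rpowNormMeasure μ q).restrict A := by
  have hB_meas : Measurable B := B.continuous.measurable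
  calc ((rpowNormMeasure μ q).restrict A).map B
      ≤ ((rpowNormMeasure μ q).restrict (B ⁻¹' A)).map B :=
        Measure.map_mono (Measure.restrict_mono hBA le_rfl) hB_meas
    _ = ((rpowNormMeasure μ q).map B).restrict A := (Measure.restrict_map hB_meas hA).symm
    _ ≤ _ := by
        rw [← Measure.restrict_smul]
        exact Measure.restrict_mono_measure (map_rpowNormMeasure_le hq hB hC) A

theorem rpowNormMeasure_setOf_lt_norm_lt_top (hq : finrank ℝ E < q) {ε : ℝ} (hε : 0 < ε) :
    rpowNormMeasure μ q {h | ε < ‖h‖} < ∞ := by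
  have hA : MeasurableSet {h : E | ε < ‖h‖} := measurableSet_lt measurable_const measurable_norm
  have hq0 : 0 < q := (Nat.cast_nonneg _).trans_lt hq
  have hpt : ∀ h ∈ {h : E | ε < ‖h‖}, ENNReal.ofReal (‖h‖ ^ (-q)) ≤
      ENNReal.ofReal ((1 / ε + 1) ^ q) * ENNReal.ofReal ((1 + ‖h‖) ^ (-q)) := by
    intro h (hh : ε < ‖h‖)
    have hle : 1 + ‖h‖ ≤ (1 / ε + 1) * ‖h‖ := by
      have : 1 ≤ 1 / ε * ‖h‖ := by rw [one_div_mul_eq_div, one_le_div hε]; exact hh.le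
      linarith
    rw [← ENNReal.ofReal_mul (by positivity)]
    exact ENNReal.ofReal_le_ofReal <|
      rpow_neg_le_mul_rpow_neg hq0.le (hε.trans hh) (by positivity) hle
  calc rpowNormMeasure μ q {h | ε < ‖h‖}
      = ∫⁻ h in {h | ε < ‖h‖}, ENNReal.ofReal (‖h‖ ^ (-q)) ∂μ := withDensity_apply _ hA
    _ ≤ ∫⁻ h in {h | ε < ‖h‖}, ENNReal.ofReal ((1 / ε + 1) ^ q) *
          ENNReal.ofReal ((1 + ‖h‖) ^ (-q)) ∂μ := setLIntegral_mono' hA hpt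
    _ ≤ ∫⁻ h, ENNReal.ofReal ((1 / ε + 1) ^ q) * ENNReal.ofReal ((1 + ‖h‖) ^ (-q)) ∂μ :=
        setLIntegral_le_lintegral _ _
    _ < ∞ := by
        rw [lintegral_const_mul _ (by fun_prop)]
        exact ENNReal.mul_lt_top ENNReal.ofReal_lt_top (finite_integral_one_add_norm hq)

end RpowNormMeasure

theorem le_inv_mul_of_le_ofReal_mul_add {θ : ℝ} (hθ₀ : 0 ≤ θ) (hθ₁ : θ < 1) {a b : ℝ≥0∞}
    (ha : a ≠ ∞) (h : a ≤ ENNReal.ofReal θ * a + b) : a ≤ (ENNReal.ofReal (1 - θ))⁻¹ * b := by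
  have hsplit : ENNReal.ofReal θ * a + ENNReal.ofReal (1 - θ) * a = a := by
    rw [← add_mul, ← ENNReal.ofReal_add hθ₀ (by linarith), add_sub_cancel, ENNReal.ofReal_one,
      one_mul]
  rw [← ENNReal.mul_le_iff_le_inv (by simpa using hθ₁) ENNReal.ofReal_ne_top]
  exact (ENNReal.add_le_add_iff_left (ENNReal.mul_ne_top ENNReal.ofReal_ne_top ha)).1
    (hsplit.trans_le h)

theorem fwdDiff_eq_half_smul_sub {E F : Type*} [AddCommGroup E] [Module ℝ E] [AddCommGroup F]
    [Module ℝ F] (f : E → F) (h x : E) :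
    Δ_[h] f x = (2⁻¹ : ℝ) • Δ_[(2 : ℝ) • h] f x - (2⁻¹ : ℝ) • Δ_[h] (Δ_[h] f) x := by
  simp only [fwdDiff, two_smul ℝ h, add_assoc]
  module

theorem eLpNorm_fwdDiff_le_half_mul_add {E F : Type*} [AddCommGroup E] [Module ℝ E]
    [MeasurableSpace E] [MeasurableAdd₂ E] [MeasurableConstSMul ℝ E] [NormedAddCommGroup F]
    [NormedSpace ℝ F] {μ η : Measure E} [SFinite μ] [SFinite η] [μ.IsAddRightInvariant]
    {p : ℝ≥0∞} (hp : 1 ≤ p) {f : E → F} (hf : AEStronglyMeasurable f μ) :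
    eLpNorm (fun z : E × E => Δ_[z.1] f z.2) p (η.prod μ) ≤
      2⁻¹ * eLpNorm (fun z : E × E => Δ_[(2 : ℝ) • z.1] f z.2) p (η.prod μ) +
        2⁻¹ * eLpNorm (fun z : E × E => Δ_[z.1] (Δ_[z.1] f) z.2) p (η.prod μ) := by
  have hmeas₁ : AEStronglyMeasurable (fun z : E × E => Δ_[(2 : ℝ) • z.1] f z.2) (η.prod μ) := by
    simpa using aestronglyMeasurable_fwdDiff hf (measurable_const_smul (2 : ℝ))
      (measurable_const (a := (0 : E)))
  have hmeas₂ : AEStronglyMeasurable (fun z : E × E => Δ_[z.1] (Δ_[z.1] f) z.2) (η.prod μ) :=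
    aestronglyMeasurable_fwdDiff_fwdDiff hf
  have hhalf : ‖(2⁻¹ : ℝ)‖ₑ = 2⁻¹ := by
    rw [Real.enorm_eq_ofReal (by norm_num), ENNReal.ofReal_inv_of_pos two_pos, ENNReal.ofReal_ofNat]
  simp only [← hhalf, ← eLpNorm_const_smul]
  refine (eLpNorm_congr_ae (ae_of_all _ fun z => ?_)).trans_le
    (eLpNorm_sub_le (hmeas₁.const_smul _) (hmeas₂.const_smul _) hp)
  exact fwdDiff_eq_half_smul_sub f z.1 z.2

section SecondDifference

variable {E F : Type*} [NormedAddCommGroup E] [NormedSpace ℝ E] [FiniteDimensional ℝ E]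
  [MeasurableSpace E] [BorelSpace E] [NormedAddCommGroup F] {μ : Measure E}
  [μ.IsAddHaarMeasure] {s : ℝ} {p : ℝ≥0∞} {f : E → F}

theorem eLpNorm_fwdDiff_two_smul_le (hs : 0 < s) (hp : p ≠ 0) (hp' : p ≠ ∞)
    (hf : AEStronglyMeasurable f μ) {A : Set E} (hA : MeasurableSet A)
    (hA₂ : Set.MapsTo ((2 : ℝ) • · : E → E) A A) :
    eLpNorm (fun z : E × E => Δ_[(2 : ℝ) • z.1] f z.2) p
        (((rpowNormMeasure μ (finrank ℝ E + s * p.toReal)).restrict A).prod μ) ≤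
      ENNReal.ofReal (2 ^ s) * eLpNorm (fun z : E × E => Δ_[z.1] f z.2) p
        (((rpowNormMeasure μ (finrank ℝ E + s * p.toReal)).restrict A).prod μ) := by
  have hp0 : 0 < p.toReal := ENNReal.toReal_pos hp hp'
  set q : ℝ := finrank ℝ E + s * p.toReal with hq_def
  have hq : 0 < q := by positivity
  let B : E →L[ℝ] E := (2 : ℝ) • ContinuousLinearMap.id ℝ E
  have hB : Function.Injective B := smul_right_injective E two_ne_zero
  have hdet : LinearMap.det (B : E →ₗ[ℝ] E) = 2 ^ finrank ℝ E := by
    simp [B, LinearMap.det_smul]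
  have hconst : (ENNReal.ofReal (2 ^ q) *
      ENNReal.ofReal |(LinearMap.det (B : E →ₗ[ℝ] E))⁻¹|) ^ (1 / p).toReal =
        ENNReal.ofReal (2 ^ s) := by
    rw [hdet, abs_of_pos (by positivity), ← ENNReal.ofReal_mul (by positivity),
      ← Real.rpow_natCast, ← Real.rpow_neg zero_le_two, ← Real.rpow_add two_pos,
      ENNReal.ofReal_rpow_of_pos (by positivity), ← Real.rpow_mul zero_le_two]
    congr 2
    simp [hq_def, hp0.ne']
  have hmap : ((rpowNormMeasure μ q).restrict A).map B ≤ _ :=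
    map_rpowNormMeasure_restrict_le hq hB (C := 2) (fun h => by simp [B, norm_smul]) hA hA₂
  have hmeas : AEStronglyMeasurable (fun z : E × E => Δ_[z.1] f z.2)
      (((rpowNormMeasure μ q).restrict A).prod μ) := by
    simpa using aestronglyMeasurable_fwdDiff hf measurable_id (measurable_const (a := (0 : E)))
  have hle := eLpNorm_comp_prodMk_add_le hp' B.continuous.measurable
    (measurable_const (a := (0 : E))) hmap hmeas
  rw [hconst] at hle
  simpa [B] using hle

variable [NormedSpace ℝ F]

theorem eLpNorm_fwdDiff_restrict_le (hs₀ : 0 < s) (hs₁ : s < 1) (hp : 1 ≤ p) (hp' : p ≠ ∞)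
    (hf : MemLp f p μ) {ε : ℝ} (hε : 0 < ε) :
    eLpNorm (fun z : E × E => Δ_[z.1] f z.2) p
        (((rpowNormMeasure μ (finrank ℝ E + s * p.toReal)).restrict {h | ε < ‖h‖}).prod μ) ≤
      (ENNReal.ofReal (1 - 2 ^ (s - 1)))⁻¹ * (2⁻¹ * eLpNorm (fun z => Δ_[z.1] (Δ_[z.1] f) z.2) p
        ((rpowNormMeasure μ (finrank ℝ E + s * p.toReal)).prod μ)) := by
  set q : ℝ := finrank ℝ E + s * p.toReal with hq_def
  have hp₀ : p ≠ 0 := (zero_lt_one.trans_le hp).ne'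
  have hq : finrank ℝ E < q := by
    have : 0 < p.toReal := ENNReal.toReal_pos hp₀ hp'
    rw [hq_def]
    linarith [mul_pos hs₀ this]
  set A : Set E := {h | ε < ‖h‖}
  have hA : MeasurableSet A := measurableSet_lt measurable_const measurable_norm
  have hA₂ : Set.MapsTo ((2 : ℝ) • · : E → E) A A := fun h (hh : ε < ‖h‖) => by
    change ε < ‖(2 : ℝ) • h‖
    rw [norm_smul, Real.norm_ofNat]
    linarith
  have : IsFiniteMeasure ((rpowNormMeasure μ q).restrict A) :=
    isFiniteMeasure_restrict.2 (rpowNormMeasure_setOf_lt_norm_lt_top hq hε).ne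
  set ν := ((rpowNormMeasure μ q).restrict A).prod μ
  set D : ℝ≥0∞ := eLpNorm (fun z : E × E => Δ_[z.1] f z.2) p ν
  have hD : D ≠ ∞ := (memLp_fwdDiff hf measurable_id).eLpNorm_ne_top
  have hpow : 2⁻¹ * ENNReal.ofReal (2 ^ s) = ENNReal.ofReal (2 ^ (s - 1)) := by
    rw [Real.rpow_sub_one two_ne_zero, ENNReal.ofReal_div_of_pos two_pos, ENNReal.ofReal_ofNat,
      mul_comm, div_eq_mul_inv]
  refine le_inv_mul_of_le_ofReal_mul_add (by positivity)
    (Real.rpow_lt_one_of_one_lt_of_neg one_lt_two (by linarith)) hD ?_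
  calc D ≤ 2⁻¹ * eLpNorm (fun z : E × E => Δ_[(2 : ℝ) • z.1] f z.2) p ν +
        2⁻¹ * eLpNorm (fun z : E × E => Δ_[z.1] (Δ_[z.1] f) z.2) p ν :=
        eLpNorm_fwdDiff_le_half_mul_add hp hf.aestronglyMeasurable
    _ ≤ 2⁻¹ * (ENNReal.ofReal (2 ^ s) * D) +
        2⁻¹ * eLpNorm (fun z : E × E => Δ_[z.1] (Δ_[z.1] f) z.2) p
          ((rpowNormMeasure μ q).prod μ) := by
        gcongr
        · exact eLpNorm_fwdDiff_two_smul_le hs₀ hp₀ hp' hf.aestronglyMeasurable hA hA₂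
        · exact Measure.prod_mono Measure.restrict_le_self le_rfl
    _ = _ := by rw [← mul_assoc, hpow]

theorem eLpNorm_fwdDiff_le_eLpNorm_fwdDiff_fwdDiff (hs₀ : 0 < s) (hs₁ : s < 1) (hp : 1 ≤ p)
    (hp' : p ≠ ∞) (hf : MemLp f p μ) :
    eLpNorm (fun z : E × E => Δ_[z.1] f z.2) p
        ((rpowNormMeasure μ (finrank ℝ E + s * p.toReal)).prod μ) ≤
      (ENNReal.ofReal (1 - 2 ^ (s - 1)))⁻¹ * (2⁻¹ * eLpNorm (fun z => Δ_[z.1] (Δ_[z.1] f) z.2) p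
        ((rpowNormMeasure μ (finrank ℝ E + s * p.toReal)).prod μ)) := by
  set q : ℝ := finrank ℝ E + s * p.toReal
  have hq : q ≠ 0 := by
    have : 0 < p.toReal := ENNReal.toReal_pos (zero_lt_one.trans_le hp).ne' hp'
    positivity
  let A (n : ℕ) : Set E := {h | 1 / ((n : ℝ) + 1) < ‖h‖}
  have hA : Monotone fun n => A n ×ˢ (univ : Set E) := fun m n hmn =>
    prod_mono_left fun h (hh : _ < ‖h‖) => (Nat.one_div_le_one_div hmn).trans_lt hh
  refine eLpNorm_le_of_forall_eLpNorm_restrict_le hp' hA ?_ fun n => ?_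
  · filter_upwards [Measure.quasiMeasurePreserving_fst.ae (ae_rpowNormMeasure_ne_zero hq)] with z hz
    obtain ⟨n, hn⟩ := exists_nat_one_div_lt (norm_pos_iff.2 hz)
    exact mem_iUnion.2 ⟨n, hn, mem_univ _⟩
  · rw [← Measure.prod_restrict, Measure.restrict_univ]
    exact eLpNorm_fwdDiff_restrict_le hs₀ hs₁ hp hp' hf Nat.one_div_pos_of_nat

end SecondDifference

theorem injective_add_smul_id {E : Type*} [NormedAddCommGroup E] [NormedSpace ℝ E] {A : E →L[ℝ] E}
    {r : ℝ} (hr : ‖A‖ < r) : Function.Injective (A + r • ContinuousLinearMap.id ℝ E) := by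
  refine (injective_iff_map_eq_zero _).2 fun h hh => ?_
  by_contra h0
  have hAh : A h = -(r • h) := eq_neg_of_add_eq_zero_left (by simpa using hh)
  have hle := A.le_opNorm h
  rw [hAh, norm_neg, norm_smul, mul_le_mul_iff_left₀ (norm_pos_iff.2 h0)] at hle
  exact (hr.trans_le (le_abs_self r)).not_ge hle

section Korn

variable {E : Type*} [NormedAddCommGroup E] [InnerProductSpace ℝ E]

/-- The component of the increment `f (x + h) - f x` along the unit vector `h / ‖h‖`, with value `0`
at `h = 0`, as a function of `z = (h, x)`. -/
def projDiff (f : E → E) (z : E × E) : ℝ := ⟪Δ_[z.1] f z.2, z.1⟫ / ‖z.1‖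

/-- The increment of `f` at `x + t • h` along the displacement `B h`, tested against that
displacement but scaled by `‖h‖`, as a function of `z = (h, x)`. -/
def linProjDiff (B : E →L[ℝ] E) (t : ℝ) (f : E → E) (z : E × E) : ℝ :=
  ⟪Δ_[B z.1] f (z.2 + t • z.1), B z.1⟫ / ‖z.1‖

/-- The second difference of `f` tested against `A h`, scaled by `‖h‖`, as a function of
`z = (h, x)`. -/
def secondDiffForm (A : E →L[ℝ] E) (f : E → E) (z : E × E) : ℝ :=
  ⟪Δ_[z.1] (Δ_[z.1] f) z.2, A z.1⟫ / ‖z.1‖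

theorem linProjDiff_id_zero (f : E → E) :
    linProjDiff (ContinuousLinearMap.id ℝ E) 0 f = projDiff f := by
  ext z
  simp [linProjDiff, projDiff]

theorem norm_linProjDiff_le (B : E →L[ℝ] E) (t : ℝ) (f : E → E) (z : E × E) :
    ‖linProjDiff B t f z‖ ≤ ‖B‖ * ‖projDiff f (B z.1, z.2 + t • z.1)‖ := by
  have hle : ‖B z.1‖ / ‖z.1‖ ≤ ‖B‖ := B.ratio_le_opNorm z.1
  have heq : linProjDiff B t f z =
      ‖B z.1‖ / ‖z.1‖ * projDiff f (B z.1, z.2 + t • z.1) := by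
    rcases eq_or_ne (B z.1) 0 with h0 | h0
    · simp [linProjDiff, h0]
    · have := norm_ne_zero_iff.2 h0
      simp only [linProjDiff, projDiff]
      field_simp
  rw [heq, norm_mul, Real.norm_of_nonneg (by positivity)]
  gcongr

/- With `k = A h + r • h`, the second difference tested against `k` combines the increments of `f`
between `x + h + k` and the three points `x`, `x + h`, `x + 2h`, all of which are projected ones:
the displacements are `k + h`, `k` and `k - h`. The coefficients `1 ∓ r` absorb the terms tested
against `h`. -/
theorem secondDiffForm_eq (A : E →L[ℝ] E) (r : ℝ) :
    secondDiffForm A =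
      (2 : ℝ) • linProjDiff (A + r • ContinuousLinearMap.id ℝ E) 1 -
        linProjDiff (A + (r - 1) • ContinuousLinearMap.id ℝ E) 2 -
        linProjDiff (A + (r + 1) • ContinuousLinearMap.id ℝ E) 0 +
        (1 - r) • linProjDiff (ContinuousLinearMap.id ℝ E) 1 +
        (1 + r) • linProjDiff (ContinuousLinearMap.id ℝ E) 0 := by
  ext f ⟨h, x⟩
  have h₁ : x + h + h + (A h + (r - 1) • h) = x + h + (A h + r • h) := by module
  have h₂ : x + (A h + (r + 1) • h) = x + h + (A h + r • h) := by module
  have h₃ : x + (2 : ℝ) • h = x + h + h := by module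
  simp [secondDiffForm, linProjDiff, fwdDiff, h₁, h₂, h₃, inner_add_right, inner_sub_left,
    inner_smul_right]
  ring

theorem norm_le_sum_abs_inner {ι : Type*} [Fintype ι] (b : OrthonormalBasis ι ℝ E) (v : E) :
    ‖v‖ ≤ ∑ i, |⟪b i, v⟫| := by
  calc ‖v‖ = ‖∑ i, ⟪b i, v⟫ • b i‖ := by rw [b.sum_repr']
    _ ≤ ∑ i, ‖⟪b i, v⟫ • b i‖ := norm_sum_le _ _
    _ = ∑ i, |⟪b i, v⟫| := by simp [norm_smul]

theorem norm_fwdDiff_fwdDiff_le_sum {ι : Type*} [Fintype ι] (b : OrthonormalBasis ι ℝ E)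
    (f : E → E) (z : E × E) :
    ‖Δ_[z.1] (Δ_[z.1] f) z.2‖ ≤
      ∑ ij : ι × ι, ‖secondDiffForm (InnerProductSpace.rankOne ℝ (b ij.1) (b ij.2)) f z‖ := by
  obtain ⟨h, x⟩ := z
  rcases eq_or_ne h 0 with rfl | hh
  · simp [fwdDiff, secondDiffForm]
  set v := Δ_[h] (Δ_[h] f) x with hv
  calc ‖v‖ = ‖v‖ * ‖h‖ / ‖h‖ := by rw [mul_div_cancel_right₀ _ (norm_ne_zero_iff.2 hh)]
    _ ≤ (∑ i, |⟪b i, v⟫|) * (∑ j, |⟪b j, h⟫|) / ‖h‖ := by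
        gcongr <;> exact norm_le_sum_abs_inner b _
    _ = _ := by
        rw [Fintype.sum_mul_sum, ← Fintype.sum_prod_type', Finset.sum_div]
        refine Finset.sum_congr rfl fun ij _ => ?_
        simp [secondDiffForm, ← hv, inner_smul_right, real_inner_comm, mul_comm]

variable [MeasurableSpace E]

/-- The operators on vector fields that are bounded by the projected difference in `Lᵖ(η × μ)`,
where `η` is a measure on displacements and `μ` one on base points. -/
def projDiffBounded (η μ : Measure E) (p : ℝ≥0∞) : Submodule ℝ ((E → E) → E × E → ℝ) where
  carrier := {Λ | (∀ f, AEStronglyMeasurable f μ → AEStronglyMeasurable (Λ f) (η.prod μ)) ∧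
    ∃ c : ℝ≥0∞, c ≠ ∞ ∧ ∀ f, AEStronglyMeasurable f μ → eLpNorm (Λ f) p (η.prod μ) ≤
      c * eLpNorm (projDiff f) p (η.prod μ)}
  zero_mem' := ⟨fun _ _ => aestronglyMeasurable_zero, 0, ENNReal.zero_ne_top, by simp⟩
  add_mem' := by
    rintro Λ Λ' ⟨hΛ, c, hc, hΛc⟩ ⟨hΛ', c', hc', hΛc'⟩
    refine ⟨fun f hf => (hΛ f hf).add (hΛ' f hf), p.LpAddConst * (c + c'),
      ENNReal.mul_ne_top (ENNReal.LpAddConst_lt_top p).ne (ENNReal.add_ne_top.2 ⟨hc, hc'⟩),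
      fun f hf => ?_⟩
    rw [mul_assoc, add_mul]
    exact (eLpNorm_add_le' (hΛ f hf) (hΛ' f hf) p).trans
      (by gcongr; exacts [hΛc f hf, hΛc' f hf])
  smul_mem' := by
    rintro a Λ ⟨hΛ, c, hc, hΛc⟩
    refine ⟨fun f hf => (hΛ f hf).const_smul a, ‖a‖ₑ * c, ENNReal.mul_ne_top enorm_ne_top hc,
      fun f hf => ?_⟩
    rw [mul_assoc, Pi.smul_apply, eLpNorm_const_smul]
    gcongr
    exact hΛc f hf

variable [BorelSpace E] [FiniteDimensional ℝ E]

theorem aestronglyMeasurable_linProjDiff {μ η : Measure E} [SFinite μ] [SFinite η]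
    [μ.IsAddRightInvariant] (B : E →L[ℝ] E) (t : ℝ) {f : E → E} (hf : AEStronglyMeasurable f μ) :
    AEStronglyMeasurable (linProjDiff B t f) (η.prod μ) := by
  have hfwd := aestronglyMeasurable_fwdDiff (η := η) hf B.continuous.measurable
    (measurable_const_smul t)
  have hB : AEStronglyMeasurable (fun z : E × E => B z.1) (η.prod μ) :=
    (B.continuous.comp continuous_fst).aestronglyMeasurable
  exact ((hfwd.inner (𝕜 := ℝ) hB).aemeasurable.div measurable_fst.norm.aemeasurable)
    |>.aestronglyMeasurable

theorem aestronglyMeasurable_projDiff {μ η : Measure E} [SFinite μ] [SFinite η]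
    [μ.IsAddRightInvariant] {f : E → E} (hf : AEStronglyMeasurable f μ) :
    AEStronglyMeasurable (projDiff f) (η.prod μ) :=
  linProjDiff_id_zero f ▸ aestronglyMeasurable_linProjDiff _ 0 hf

variable {μ : Measure E} [μ.IsAddHaarMeasure] {q : ℝ} {p : ℝ≥0∞}

theorem linProjDiff_mem_projDiffBounded (hq : 0 < q) (hp : p ≠ ∞) {B : E →L[ℝ] E}
    (hB : Function.Injective B) (t : ℝ) :
    linProjDiff B t ∈ projDiffBounded (rpowNormMeasure μ q) μ p := by
  have hmap := map_rpowNormMeasure_le (μ := μ) hq hB B.le_opNorm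
  set K : ℝ≥0∞ := ENNReal.ofReal (‖B‖ ^ q) * ENNReal.ofReal |(LinearMap.det (B : E →ₗ[ℝ] E))⁻¹|
  refine ⟨fun f hf => aestronglyMeasurable_linProjDiff B t hf,
    ENNReal.ofReal ‖B‖ * K ^ (1 / p).toReal, by finiteness, fun f hf => ?_⟩
  calc eLpNorm (linProjDiff B t f) p ((rpowNormMeasure μ q).prod μ)
      ≤ ENNReal.ofReal ‖B‖ * eLpNorm (fun z : E × E => projDiff f (B z.1, z.2 + t • z.1)) p
          ((rpowNormMeasure μ q).prod μ) :=
        eLpNorm_le_mul_eLpNorm_of_ae_le_mul (ae_of_all _ (norm_linProjDiff_le B t f)) p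
    _ ≤ ENNReal.ofReal ‖B‖ *
          (K ^ (1 / p).toReal * eLpNorm (projDiff f) p ((rpowNormMeasure μ q).prod μ)) := by
        gcongr
        exact eLpNorm_comp_prodMk_add_le hp B.continuous.measurable (measurable_const_smul t) hmap
          (aestronglyMeasurable_projDiff hf)
    _ = _ := (mul_assoc ..).symm

theorem secondDiffForm_mem_projDiffBounded (hq : 0 < q) (hp : p ≠ ∞) (A : E →L[ℝ] E) :
    secondDiffForm A ∈ projDiffBounded (rpowNormMeasure μ q) μ p := by
  -- `r - 1`, `r` and `r + 1` all exceed `‖A‖`.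
  set r : ℝ := ‖A‖ + 2 with hr
  have hmem {B : E →L[ℝ] E} (hB : Function.Injective B) (t : ℝ) :
      linProjDiff B t ∈ projDiffBounded (rpowNormMeasure μ q) μ p :=
    linProjDiff_mem_projDiffBounded hq hp hB t
  have hid : Function.Injective (ContinuousLinearMap.id ℝ E) := Function.injective_id
  rw [secondDiffForm_eq A r]
  refine add_mem (add_mem (sub_mem (sub_mem (Submodule.smul_mem _ _ ?_) ?_) ?_)
    (Submodule.smul_mem _ _ (hmem hid 1))) (Submodule.smul_mem _ _ (hmem hid 0)) <;>
  exact hmem (injective_add_smul_id (by linarith [hr])) _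

theorem exists_eLpNorm_fwdDiff_fwdDiff_le (hq : 0 < q) (hp : 1 ≤ p) (hp' : p ≠ ∞) :
    ∃ c : ℝ≥0∞, c ≠ ∞ ∧ ∀ f : E → E, AEStronglyMeasurable f μ →
      eLpNorm (fun z : E × E => Δ_[z.1] (Δ_[z.1] f) z.2) p ((rpowNormMeasure μ q).prod μ) ≤
        c * eLpNorm (projDiff f) p ((rpowNormMeasure μ q).prod μ) := by
  let b := stdOrthonormalBasis ℝ E
  let Λ (ij : _ × _) := secondDiffForm (InnerProductSpace.rankOne ℝ (b ij.1) (b ij.2))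
  have hΛ (ij) : Λ ij ∈ projDiffBounded (rpowNormMeasure μ q) μ p :=
    secondDiffForm_mem_projDiffBounded hq hp' _
  choose hmeas c hc hle using hΛ
  refine ⟨∑ ij, c ij, ENNReal.sum_ne_top.2 fun ij _ => hc ij, fun f hf => ?_⟩
  set ν := (rpowNormMeasure μ q).prod μ
  calc eLpNorm (fun z : E × E => Δ_[z.1] (Δ_[z.1] f) z.2) p ν
      ≤ eLpNorm (∑ ij, fun z => ‖Λ ij f z‖) p ν :=
        eLpNorm_mono_real fun z =>
          (norm_fwdDiff_fwdDiff_le_sum b f z).trans_eq (by rw [Finset.sum_apply])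
    _ ≤ ∑ ij, eLpNorm (fun z => ‖Λ ij f z‖) p ν :=
        eLpNorm_sum_le (fun ij _ => (hmeas ij f hf).norm) hp
    _ ≤ ∑ ij, c ij * eLpNorm (projDiff f) p ν :=
        Finset.sum_le_sum fun ij _ => (eLpNorm_norm _).trans_le (hle ij f hf)
    _ = (∑ ij, c ij) * eLpNorm (projDiff f) p ν := (Finset.sum_mul ..).symm

end Korn

section GagliardoSeminorm

variable {E F : Type*} [NormedAddCommGroup E] [NormedSpace ℝ E] [MeasurableSpace E]
  [NormedAddCommGroup F]

/-- The Gagliardo seminorm `[f]_{W^{s,p}(E)}` with respect to a measure `μ` on `E`. -/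
def gagliardoSeminorm (μ : Measure E) (s p : ℝ) (f : E → F) : ℝ≥0∞ :=
  (∫⁻ x, ∫⁻ y, ENNReal.ofReal (‖f y - f x‖ ^ p / ‖y - x‖ ^ (finrank ℝ E + s * p)) ∂μ ∂μ) ^ (1 / p)

variable [BorelSpace E] [FiniteDimensional ℝ E] {μ : Measure E} [μ.IsAddHaarMeasure]

theorem eLpNorm_rpowNormMeasure_prod {p q : ℝ} (hp : 0 < p) {u : E × E → F}
    (hu : AEStronglyMeasurable u ((rpowNormMeasure μ q).prod μ)) :
    eLpNorm u (ENNReal.ofReal p) ((rpowNormMeasure μ q).prod μ) =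
      (∫⁻ x, ∫⁻ y, ENNReal.ofReal (‖u (y - x, x)‖ ^ p / ‖y - x‖ ^ q) ∂μ ∂μ) ^ (1 / p) := by
  have hkernel (h x : E) : ENNReal.ofReal (‖h‖ ^ (-q)) * ‖u (h, x)‖ₑ ^ p =
      ENNReal.ofReal (‖u (h, x)‖ ^ p / ‖h‖ ^ q) := by
    rw [← ofReal_norm, ENNReal.ofReal_rpow_of_nonneg (norm_nonneg _) hp.le,
      ← ENNReal.ofReal_mul (by positivity), Real.rpow_neg (norm_nonneg _), inv_mul_eq_div]
  rw [eLpNorm_eq_lintegral_rpow_enorm_toReal (by simpa using hp) ENNReal.ofReal_ne_top,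
    ENNReal.toReal_ofReal hp.le, lintegral_prod_symm _ (hu.enorm.pow_const p)]
  congr 1
  refine lintegral_congr fun x => ?_
  simp only [lintegral_rpowNormMeasure, hkernel]
  exact (lintegral_sub_right_eq_self (fun h => ENNReal.ofReal (‖u (h, x)‖ ^ p / ‖h‖ ^ q)) x).symm

theorem gagliardoSeminorm_eq_eLpNorm {s p : ℝ} (hp : 0 < p) {f : E → F}
    (hf : AEStronglyMeasurable f μ) :
    gagliardoSeminorm μ s p f = eLpNorm (fun z : E × E => Δ_[z.1] f z.2) (ENNReal.ofReal p)
      ((rpowNormMeasure μ (finrank ℝ E + s * p)).prod μ) := by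
  have hmeas := aestronglyMeasurable_fwdDiff (η := rpowNormMeasure μ (finrank ℝ E + s * p)) hf
    measurable_id (measurable_const (a := (0 : E)))
  simp only [id, add_zero] at hmeas
  rw [eLpNorm_rpowNormMeasure_prod hp hmeas]
  simp [gagliardoSeminorm, fwdDiff]

end GagliardoSeminorm

section ProjGagliardoSeminorm

variable {E : Type*} [NormedAddCommGroup E] [InnerProductSpace ℝ E] [MeasurableSpace E]

/-- The projected Gagliardo seminorm `[f]_{𝒳^s_p(E)}` with respect to a measure `μ` on `E`. -/
def projGagliardoSeminorm (μ : Measure E) (s p : ℝ) (f : E → E) : ℝ≥0∞ :=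
  (∫⁻ x, ∫⁻ y, ENNReal.ofReal ((|⟪f y - f x, y - x⟫| / ‖y - x‖) ^ p /
    ‖y - x‖ ^ (finrank ℝ E + s * p)) ∂μ ∂μ) ^ (1 / p)

theorem projGagliardoSeminorm_le_gagliardoSeminorm (μ : Measure E) (s : ℝ) {p : ℝ} (hp : 0 ≤ p)
    (f : E → E) : projGagliardoSeminorm μ s p f ≤ gagliardoSeminorm μ s p f := by
  unfold projGagliardoSeminorm gagliardoSeminorm
  gcongr with x y
  exact div_le_of_le_mul₀ (norm_nonneg _) (norm_nonneg _) (abs_real_inner_le_norm _ _)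

variable [BorelSpace E] [FiniteDimensional ℝ E] {μ : Measure E} [μ.IsAddHaarMeasure]

theorem projGagliardoSeminorm_eq_eLpNorm {s p : ℝ} (hp : 0 < p) {f : E → E}
    (hf : AEStronglyMeasurable f μ) :
    projGagliardoSeminorm μ s p f = eLpNorm (projDiff f) (ENNReal.ofReal p)
      ((rpowNormMeasure μ (finrank ℝ E + s * p)).prod μ) := by
  simp [eLpNorm_rpowNormMeasure_prod hp (aestronglyMeasurable_projDiff hf), projGagliardoSeminorm,
    projDiff, fwdDiff]

theorem exists_gagliardoSeminorm_le_mul_projGagliardoSeminorm (μ : Measure E) [μ.IsAddHaarMeasure]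
    {s p : ℝ} (hs : s ∈ Ioo (0 : ℝ) 1) (hp : 1 ≤ p) :
    ∃ C : ℝ, 0 < C ∧ ∀ f : E → E, MemLp f (ENNReal.ofReal p) μ →
      gagliardoSeminorm μ s p f ≤ ENNReal.ofReal C * projGagliardoSeminorm μ s p f := by
  have hp₀ : 0 < p := one_pos.trans_le hp
  have hp₁ : 1 ≤ ENNReal.ofReal p := ENNReal.one_le_ofReal.2 hp
  have hq : 0 < finrank ℝ E + s * p := by
    have := hs.1
    positivity
  have hθ : 0 < 1 - (2 : ℝ) ^ (s - 1) :=
    sub_pos.2 (Real.rpow_lt_one_of_one_lt_of_neg one_lt_two (by linarith [hs.2]))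
  obtain ⟨c, hc, hcf⟩ := exists_eLpNorm_fwdDiff_fwdDiff_le (μ := μ) hq hp₁ ENNReal.ofReal_ne_top
  set K : ℝ≥0∞ := (ENNReal.ofReal (1 - 2 ^ (s - 1)))⁻¹ * (2⁻¹ * c) with hK_def
  have hK : K ≠ ∞ := ENNReal.mul_ne_top (by simpa using hθ) (by finiteness)
  refine ⟨K.toReal + 1, by positivity, fun f hf => ?_⟩
  have hsecond := eLpNorm_fwdDiff_le_eLpNorm_fwdDiff_fwdDiff hs.1 hs.2 hp₁ ENNReal.ofReal_ne_top hf
  rw [ENNReal.toReal_ofReal hp₀.le] at hsecond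
  calc gagliardoSeminorm μ s p f
      ≤ (ENNReal.ofReal (1 - 2 ^ (s - 1)))⁻¹ * (2⁻¹ * (c * projGagliardoSeminorm μ s p f)) := by
        rw [gagliardoSeminorm_eq_eLpNorm hp₀ hf.1, projGagliardoSeminorm_eq_eLpNorm hp₀ hf.1]
        refine hsecond.trans ?_
        gcongr
        exact hcf f hf.1
    _ = K * projGagliardoSeminorm μ s p f := by simp only [hK_def, mul_assoc]
    _ ≤ ENNReal.ofReal (K.toReal + 1) * projGagliardoSeminorm μ s p f := by
        gcongr
        exact ENNReal.le_ofReal_iff_toReal_le hK (by positivity) |>.2 (by linarith)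

end ProjGagliardoSeminorm

theorem fractional_korn_whole_space_general {E : Type*} [NormedAddCommGroup E]
    [InnerProductSpace ℝ E] [FiniteDimensional ℝ E] [MeasurableSpace E] [BorelSpace E]
    (μ : Measure E) [μ.IsAddHaarMeasure] {s p : ℝ} (hs : s ∈ Ioo (0 : ℝ) 1) (hp : 1 ≤ p) :
    (∀ f : E → E, projGagliardoSeminorm μ s p f ≤ gagliardoSeminorm μ s p f) ∧
    (∃ C : ℝ, 0 < C ∧ ∀ f : E → E, MemLp f (ENNReal.ofReal p) μ →
      gagliardoSeminorm μ s p f ≤ ENNReal.ofReal C * projGagliardoSeminorm μ s p f) ∧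
    (∀ f : E → E, MemLp f (ENNReal.ofReal p) μ →
      (gagliardoSeminorm μ s p f < ∞ ↔ projGagliardoSeminorm μ s p f < ∞)) := by
  have hle := projGagliardoSeminorm_le_gagliardoSeminorm μ s (zero_le_one.trans hp)
  obtain ⟨C, hC, hCf⟩ := exists_gagliardoSeminorm_le_mul_projGagliardoSeminorm μ hs hp
  exact ⟨hle, ⟨C, hC, hCf⟩, fun f hf => ⟨(hle f).trans_lt, fun hfin =>
    (hCf f hf).trans_lt (ENNReal.mul_lt_top ENNReal.ofReal_lt_top hfin)⟩⟩

theorem gagSem_univ_eq_gagliardoSeminorm (d : ℕ) (s p : ℝ) (f : Ed d → Ed d) :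
    gagSem d s p univ f = gagliardoSeminorm volume s p f := by
  simp [gagSem, gagP, gagliardoSeminorm]

theorem projSem_univ_eq_projGagliardoSeminorm (d : ℕ) (s p : ℝ) (f : Ed d → Ed d) :
    projSem d s p univ f = projGagliardoSeminorm volume s p f := by
  simp [projSem, projGagP, projGagliardoSeminorm]

/-- **Fractional Korn's inequality on the whole space.**
For `d ≥ 1`, `s ∈ (0,1)` and `1 < p < ∞`: every `f ∈ L^p(ℝ^d; ℝ^d)` satisfies
`[f]_{𝒳^s_p(ℝ^d)} ≤ [f]_{W^{s,p}(ℝ^d)}`, there is a constant `C = C(d,p,s) > 0` with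
`[f]_{W^{s,p}(ℝ^d)} ≤ C [f]_{𝒳^s_p(ℝ^d)}`, and in particular `[f]_{W^{s,p}}` is finite
iff `[f]_{𝒳^s_p}` is finite. -/
theorem fractional_korn_whole_space (d : ℕ) (hd : 1 ≤ d) (s p : ℝ)
    (hs : s ∈ Set.Ioo (0 : ℝ) 1) (hp : 1 < p) :
    (∀ f : Ed d → Ed d, MemLp f (ENNReal.ofReal p) volume →
      projSem d s p Set.univ f ≤ gagSem d s p Set.univ f) ∧
    (∃ C : ℝ, 0 < C ∧ ∀ f : Ed d → Ed d, MemLp f (ENNReal.ofReal p) volume →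
      gagSem d s p Set.univ f ≤ ENNReal.ofReal C * projSem d s p Set.univ f) ∧
    (∀ f : Ed d → Ed d, MemLp f (ENNReal.ofReal p) volume →
      (gagSem d s p Set.univ f < ∞ ↔ projSem d s p Set.univ f < ∞)) := by
  simp only [gagSem_univ_eq_gagliardoSeminorm, projSem_univ_eq_projGagliardoSeminorm]
  have ⟨hle, hC, hfin⟩ := fractional_korn_whole_space_general (E := Ed d) volume hs hp.le
  exact ⟨fun f _ => hle f, hC, hfin⟩
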